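/- Let n ≥ 1, 0 < m < 1, and 0 < s < m, and let 1/m ≤ p < ∞. For every measurable function f : ℝⁿ → ℝⁿ, one has sup_{y ∈ ℝⁿ, y ≠ 0} |y|^{−s} ‖Δ_y(J_m ∘ f)‖_{L^p(ℝⁿ)} ≤ 6 ( sup_{y ∈ ℝⁿ, y ≠ 0} |y|^{−s/m} ‖Δ_y f‖_{L^{mp}(ℝⁿ)} )^m, where Δ_y g(x) = g(x+y) − g(x) (the inequality being interpreted in [0,∞]). -/

import Mathlib

/-!
The map `J_m` is `m`-Hölder: `|J_m a - J_m b| ≤ 4 |a - b|^m`. To see this, let `|b| ≤ |a|` and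
split `J_m a - J_m b = |a|^{m-1} (a - b) + (|a|^{m-1} - |b|^{m-1}) b`. Both terms have norm at most
`|a|^{m-1} |a - b|`, the second because `|b|^m ≤ |a|^m`; and `|a - b| ≤ 2 |a|` together with
`m - 1 < 0` bounds this by `2 |a - b|^m`.

Taking `L^p` norms, `‖|g|^m‖_p = ‖g‖_{mp}^m` with `g = Δ_y f`, and the weights match because
`|y|^{-s} = (|y|^{-s/m})^m`; the estimate holds for each `y` separately, hence for the suprema.
-/

open MeasureTheory

/-- The nonlinear power `J_m(a) = |a|^{m-1} a` (with `J_m(0) = 0`). -/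
noncomputable def Jm (n : ℕ) (m : ℝ) (a : EuclideanSpace ℝ (Fin n)) :
    EuclideanSpace ℝ (Fin n) :=
  ‖a‖ ^ (m - 1) • a

lemma norm_Jm_sub_le_of_norm_le (n : ℕ) {m : ℝ} (hm0 : 0 < m) (hm1 : m < 1)
    (a b : EuclideanSpace ℝ (Fin n)) (hab : ‖b‖ ≤ ‖a‖) :
    ‖Jm n m a - Jm n m b‖ ≤ 4 * ‖a - b‖ ^ m := by
  rcases eq_or_ne a b with rfl | hne
  · simp [Real.zero_rpow hm0.ne']
  have hd : 0 < ‖a - b‖ := norm_pos_iff.2 (sub_ne_zero.2 hne)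
  have hd2 : ‖a - b‖ / 2 ≤ ‖a‖ := by linarith [norm_sub_le a b]
  have ha : 0 < ‖a‖ := by linarith
  have key : ‖a‖ ^ (m - 1) * ‖a - b‖ ≤ 2 * ‖a - b‖ ^ m := by
    have h1 : ‖a‖ ^ (m - 1) ≤ (‖a - b‖ / 2) ^ (m - 1) :=
      Real.rpow_le_rpow_of_nonpos (by positivity) hd2 (by linarith)
    have h2 : (‖a - b‖ / 2) ^ (m - 1) * (‖a - b‖ / 2) = (‖a - b‖ / 2) ^ m := by
      rw [← Real.rpow_add_one (by positivity)]; ring_nf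
    have h3 : (‖a - b‖ / 2) ^ m ≤ ‖a - b‖ ^ m :=
      Real.rpow_le_rpow (by positivity) (by linarith) hm0.le
    nlinarith [mul_le_mul_of_nonneg_right h1 hd.le]
  have hsplit : Jm n m a - Jm n m b
      = ‖a‖ ^ (m - 1) • (a - b) + (‖a‖ ^ (m - 1) - ‖b‖ ^ (m - 1)) • b := by
    simp only [Jm]; module
  have hsecond : ‖(‖a‖ ^ (m - 1) - ‖b‖ ^ (m - 1)) • b‖ ≤ ‖a‖ ^ (m - 1) * ‖a - b‖ := by
    rcases eq_or_ne b 0 with rfl | hb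
    · simp only [smul_zero, norm_zero]; positivity
    have hb' : 0 < ‖b‖ := norm_pos_iff.2 hb
    have h1 : ‖a‖ ^ (m - 1) ≤ ‖b‖ ^ (m - 1) :=
      Real.rpow_le_rpow_of_nonpos hb' hab (by linarith)
    have h2 : ‖b‖ ^ (m - 1) * ‖b‖ = ‖b‖ ^ m := by
      rw [← Real.rpow_add_one hb'.ne']; ring_nf
    have h3 : ‖a‖ ^ (m - 1) * ‖a‖ = ‖a‖ ^ m := by
      rw [← Real.rpow_add_one ha.ne']; ring_nf
    have h4 : ‖b‖ ^ m ≤ ‖a‖ ^ m := Real.rpow_le_rpow hb'.le hab hm0.le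
    have h5 : ‖a‖ ^ (m - 1) * (‖a‖ - ‖b‖) ≤ ‖a‖ ^ (m - 1) * ‖a - b‖ :=
      mul_le_mul_of_nonneg_left (norm_sub_norm_le a b) (by positivity)
    rw [norm_smul, Real.norm_eq_abs, abs_of_nonpos (by linarith)]
    nlinarith
  have hfirst : ‖‖a‖ ^ (m - 1) • (a - b)‖ = ‖a‖ ^ (m - 1) * ‖a - b‖ := by
    rw [norm_smul, Real.norm_of_nonneg (by positivity)]
  rw [hsplit]
  linarith [norm_add_le (‖a‖ ^ (m - 1) • (a - b)) ((‖a‖ ^ (m - 1) - ‖b‖ ^ (m - 1)) • b)]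

/-- `J_m` is globally `m`-Hölder with constant `4`. -/
lemma norm_Jm_sub_le (n : ℕ) {m : ℝ} (hm0 : 0 < m) (hm1 : m < 1)
    (a b : EuclideanSpace ℝ (Fin n)) :
    ‖Jm n m a - Jm n m b‖ ≤ 4 * ‖a - b‖ ^ m := by
  rcases le_total ‖b‖ ‖a‖ with h | h
  · exact norm_Jm_sub_le_of_norm_le n hm0 hm1 a b h
  · rw [norm_sub_rev, norm_sub_rev a b]
    exact norm_Jm_sub_le_of_norm_le n hm0 hm1 b a h

theorem besov_seminorm_sup_Jm_comp_le (n : ℕ) (hn : 1 ≤ n) (m s p : ℝ)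
    (hm0 : 0 < m) (hm1 : m < 1) (hs0 : 0 < s) (hsm : s < m) (hp : 1 / m ≤ p)
    (f : EuclideanSpace ℝ (Fin n) → EuclideanSpace ℝ (Fin n)) (hf : Measurable f) :
    (⨆ (y : EuclideanSpace ℝ (Fin n)) (_ : y ≠ 0),
        ENNReal.ofReal (‖y‖ ^ (-s)) *
          eLpNorm (fun x => Jm n m (f (x + y)) - Jm n m (f x)) (ENNReal.ofReal p) volume)
      ≤ 6 * (⨆ (y : EuclideanSpace ℝ (Fin n)) (_ : y ≠ 0),
          ENNReal.ofReal (‖y‖ ^ (-(s / m))) *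
            eLpNorm (fun x => f (x + y) - f x) (ENNReal.ofReal (m * p)) volume) ^ m := by
  refine iSup₂_le fun y hy => ?_
  have hy' : 0 < ‖y‖ := norm_pos_iff.2 hy
  have hmp : ENNReal.ofReal (m * p) = ENNReal.ofReal p * ENNReal.ofReal m := by
    rw [mul_comm, ENNReal.ofReal_mul' hm0.le]
  have hLp : eLpNorm (fun x => Jm n m (f (x + y)) - Jm n m (f x)) (ENNReal.ofReal p) volume
      ≤ 6 * eLpNorm (fun x => f (x + y) - f x) (ENNReal.ofReal (m * p)) volume ^ m := by
    rw [hmp, ← eLpNorm_norm_rpow _ hm0]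
    have h := eLpNorm_le_mul_eLpNorm_of_ae_le_mul (μ := volume) (c := 6)
      (f := fun x => Jm n m (f (x + y)) - Jm n m (f x))
      (g := fun x => ‖f (x + y) - f x‖ ^ m)
      (Filter.Eventually.of_forall fun x => by
        have h0 : 0 ≤ ‖f (x + y) - f x‖ ^ m := by positivity
        rw [Real.norm_of_nonneg h0]
        linarith [norm_Jm_sub_le n hm0 hm1 (f (x + y)) (f x)]) (ENNReal.ofReal p)
    simpa using h
  have hw : ENNReal.ofReal (‖y‖ ^ (-s)) = ENNReal.ofReal (‖y‖ ^ (-(s / m))) ^ m := by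
    rw [ENNReal.ofReal_rpow_of_nonneg (by positivity) hm0.le, ← Real.rpow_mul hy'.le]
    congr 2
    field_simp
  calc _ ≤ ENNReal.ofReal (‖y‖ ^ (-s)) *
        (6 * eLpNorm (fun x => f (x + y) - f x) (ENNReal.ofReal (m * p)) volume ^ m) := by gcongr
    _ = 6 * (ENNReal.ofReal (‖y‖ ^ (-(s / m))) *
          eLpNorm (fun x => f (x + y) - f x) (ENNReal.ofReal (m * p)) volume) ^ m := by
        rw [hw, ENNReal.mul_rpow_of_nonneg _ _ hm0.le, mul_left_comm]
    _ ≤ _ := by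
        gcongr
        exact le_iSup₂ (f := fun (y : EuclideanSpace ℝ (Fin n)) (_ : y ≠ 0) =>
          ENNReal.ofReal (‖y‖ ^ (-(s / m))) *
            eLpNorm (fun x => f (x + y) - f x) (ENNReal.ofReal (m * p)) volume) y hy
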